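/- Let X and Y be nonempty finite sets, μ, ν strictly positive weight functions, c a cost, ε > 0, φ₁, φ₂ entropy functions satisfying Assumption A, and 𝒥_A, 𝒥_B two partitions of X into nonempty subsets. Suppose Θ is a weight rule which, for every partition 𝒥 ∈ {𝒥_A, 𝒥_B}, assigns to the family of current cell plans (π_J)_{J∈𝒥} and of cell minimizers (π̃_J)_{J∈𝒥} a weight vector (θ_J)_{J∈𝒥} ∈ [0,1]^𝒥, such that: (i) Θ is continuous in its arguments, and (ii) for every plan π with E(π) < ∞, the updated plan π̄ := Σ_J (1−θ_J)π_J + θ_J π̃_J (with π_J := π|_{X_J×Y} and π̃_J := S_J(π) the cell minimizers) satisfies E(π̄) < E(π) unless π_J = π̃_J for all J ∈ 𝒥. Define the parallel iterates (π^k)_k from an initial plan π⁰ with E(π⁰) < ∞ by alternately applying this parallel update with partition 𝒥_A (odd k) and 𝒥_B (even k). Then (π^k)_k converges pointwise to the unique global minimizer of E. -/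

import Mathlib

open Filter Topology
open scoped Classical

noncomputable section

/-- `φ : ℝ → ℝ ∪ {+∞}` is an entropy function: lower semicontinuous, convex,
`dom(φ) ⊆ [0,∞)`, `dom(φ)\{0} ≠ ∅`, never taking the value `-∞`. -/
def IsEntropyFn (φ : ℝ → EReal) : Prop :=
  LowerSemicontinuous φ ∧
  (∀ x y a b : ℝ, 0 ≤ a → 0 ≤ b → a + b = 1 →
      φ (a * x + b * y) ≤ (a : EReal) * φ x + (b : EReal) * φ y) ∧
  (∀ x : ℝ, φ x ≠ ⊥) ∧
  (∀ x : ℝ, φ x < ⊤ → 0 ≤ x) ∧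
  (∃ x : ℝ, x ≠ 0 ∧ φ x < ⊤)

/-- The recession slope `φ'_∞ = lim_{x→∞} φ(x)/x`. -/
def recessionSlope (φ : ℝ → EReal) : EReal :=
  Filter.limsup (fun x : ℝ => φ x * ((x⁻¹ : ℝ) : EReal)) Filter.atTop

/-- The `φ`-divergence on a finite set `Z`:
`D_φ(ρ|σ) = ∑_{z : σ z > 0} σ z · φ(ρ z / σ z) + φ'_∞ · ∑_{z : σ z = 0} ρ z`. -/
def divergence {Z : Type*} [Fintype Z] (φ : ℝ → EReal) (ρ σ : Z → ℝ) : EReal :=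
  (∑ z, if 0 < σ z then (σ z : EReal) * φ (ρ z / σ z) else 0)
    + recessionSlope φ * ((∑ z, if σ z = 0 then ρ z else 0 : ℝ) : EReal)

/-- The convex conjugate `φ*(z) = sup_{x ∈ ℝ} (z·x − φ(x))`. -/
def conjFn (φ : ℝ → EReal) (z : ℝ) : EReal :=
  ⨆ x : ℝ, (((z * x : ℝ) : EReal) - φ x)

/-- Kullback–Leibler divergence on a finite set, with `0·log 0 = 0`:
`KL(ρ|σ) = ∑ z (ρ z log(ρ z/σ z) − ρ z + σ z)` if `ρ ≪ σ`, else `+∞`. -/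
def KLfin {Z : Type*} [Fintype Z] (ρ σ : Z → ℝ) : EReal :=
  if ∀ z, σ z = 0 → ρ z = 0 then
    ((∑ z, (ρ z * Real.log (ρ z / σ z) - ρ z + σ z) : ℝ) : EReal)
  else ⊤

/-- Assumption A: the entropy function `φ` is nonnegative, finite on `[0,∞)`,
and continuously differentiable on the interior `(0,∞)` of its domain. -/
def AssumptionA (φ : ℝ → EReal) : Prop :=
  IsEntropyFn φ ∧ (∀ x : ℝ, 0 ≤ φ x) ∧ (∀ x : ℝ, 0 ≤ x → φ x ≠ ⊤) ∧
  ContDiffOn ℝ 1 (fun s : ℝ => (φ s).toReal) (Set.Ioi (0 : ℝ))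

/-- Primal objective of the unbalanced (cell) problem with `Y`-submarginal `νm`:
`E_J(π|νm) = ⟨c, π⟩ + ε KL(π | μ⊗ν) + D_{φ₁}(P_X π | μ) + D_{φ₂}(P_Y π + νm | ν)`. -/
def EJfun {W Y : Type*} [Fintype W] [Fintype Y]
    (c : W → Y → ℝ) (ε : ℝ) (φ₁ φ₂ : ℝ → EReal)
    (μ : W → ℝ) (ν : Y → ℝ) (νm : Y → ℝ) (π : W → Y → ℝ) : EReal :=
  ((∑ x, ∑ y, c x y * π x y : ℝ) : EReal)
    + (ε : EReal) * KLfin (fun p : W × Y => π p.1 p.2) (fun p : W × Y => μ p.1 * ν p.2)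
    + divergence φ₁ (fun x => ∑ y, π x y) μ
    + divergence φ₂ (fun y => (∑ x, π x y) + νm y) ν

/-- Dual objective of the unbalanced (cell) problem with `Y`-submarginal `νm`. -/
def DJfun {W Y : Type*} [Fintype W] [Fintype Y]
    (c : W → Y → ℝ) (ε : ℝ) (φ₁ φ₂ : ℝ → EReal)
    (μ : W → ℝ) (ν : Y → ℝ) (νm : Y → ℝ) (α : W → ℝ) (β : Y → ℝ) : EReal :=
  ((ε * ∑ x, ∑ y, (1 - Real.exp ((α x + β y - c x y) / ε)) * (μ x * ν y) : ℝ) : EReal)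
    - (∑ x, (μ x : EReal) * conjFn φ₁ (-(α x)))
    - (∑ y, (ν y : EReal) * conjFn φ₂ (-(β y)))
    - ((∑ y, β y * νm y : ℝ) : EReal)

/-- The `Y`-submarginal `ν_{-J}` of the plan `π` outside the cell `J`:
`ν_{-J}(y) = ∑_{x ∉ J} π(x,y)`. -/
def outMarg {X Y : Type*} [Fintype X] (J : Set X) (π : X → Y → ℝ) : Y → ℝ :=
  fun y => ∑ x, (Jᶜ).indicator (fun x' => π x' y) x

/-- The global unbalanced objective
`E(π) = ⟨c, π⟩ + ε KL(π|μ⊗ν) + D_{φ₁}(P_X π|μ) + D_{φ₂}(P_Y π|ν)`. -/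
def Eglobal {X Y : Type*} [Fintype X] [Fintype Y]
    (c : X → Y → ℝ) (ε : ℝ) (φ₁ φ₂ : ℝ → EReal)
    (μ : X → ℝ) (ν : Y → ℝ) (π : X → Y → ℝ) : EReal :=
  EJfun c ε φ₁ φ₂ μ ν (fun _ => 0) π

/-- An indexed family `Js : Fin n → Set X` is a partition of `X` into nonempty
subsets. -/
def IsFinPartition {X : Type*} {n : ℕ} (Js : Fin n → Set X) : Prop :=
  (∀ i, (Js i).Nonempty) ∧ (⋃ i, Js i) = Set.univ ∧
    ∀ i j, i ≠ j → Disjoint (Js i) (Js j)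

/-- `update` implements one cell update: `update J π` agrees with `π` outside
`J × Y` and its restriction to `J × Y` is the (unique) minimizer of the cell
subproblem `E_J(·|ν_{-J})` with `ν_{-J}(y) = ∑_{x ∉ J} π(x,y)`. -/
def IsCellUpdate {X Y : Type*} [Fintype X] [Fintype Y]
    (c : X → Y → ℝ) (ε : ℝ) (φ₁ φ₂ : ℝ → EReal) (μ : X → ℝ) (ν : Y → ℝ)
    (update : Set X → (X → Y → ℝ) → (X → Y → ℝ)) : Prop :=
  ∀ (J : Set X) (π : X → Y → ℝ), (∀ x y, 0 ≤ π x y) →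
    (∀ x y, 0 ≤ update J π x y) ∧
    (∀ x, x ∉ J → ∀ y, update J π x y = π x y) ∧
    ∀ π' : ↥J → Y → ℝ, (∀ (j : J) (y : Y), 0 ≤ π' j y) →
      EJfun (fun (j : J) y => c j y) ε φ₁ φ₂ (fun (j : J) => μ j) ν (outMarg J π)
          (fun (j : J) y => update J π j y)
        ≤ EJfun (fun (j : J) y => c j y) ε φ₁ φ₂ (fun (j : J) => μ j) ν (outMarg J π) π'

/-- One sequential domain decomposition sweep: cycle through the cells of the
partition in their fixed order, updating the current plan after each cell. -/
def sweep {X Y : Type*} (update : Set X → (X → Y → ℝ) → (X → Y → ℝ))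
    {n : ℕ} (Js : Fin n → Set X) (π : X → Y → ℝ) : X → Y → ℝ :=
  (List.ofFn Js).foldl (fun p J => update J p) π

/-- The restriction of a plan to the cell `J × Y`, extended by zero. -/
def cellRestr {X Y : Type*} (J : Set X) (π : X → Y → ℝ) : X → Y → ℝ :=
  fun x y => J.indicator (fun x' => π x' y) x

/-- Convex combination `∑_J (1 − θ_J) π_J + θ_J π̃_J` of cell plans. -/
def combPlan {X Y : Type*} {n : ℕ}
    (πJ tπ : Fin n → X → Y → ℝ) (θ : Fin n → ℝ) : X → Y → ℝ :=
  fun x y => ∑ i, ((1 - θ i) * πJ i x y + θ i * tπ i x y)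

/-- `S i π` is the unique minimizer of the cell subproblem on cell `Js i`
with `Y`-submarginal `ν_{-J}(y) = ∑_{x ∉ Js i} π(x,y)`, extended by zero. -/
def IsSolveMap {X Y : Type*} [Fintype X] [Fintype Y]
    (c : X → Y → ℝ) (ε : ℝ) (φ₁ φ₂ : ℝ → EReal) (μ : X → ℝ) (ν : Y → ℝ)
    {n : ℕ} (Js : Fin n → Set X)
    (S : Fin n → (X → Y → ℝ) → (X → Y → ℝ)) : Prop :=
  ∀ (i : Fin n) (π : X → Y → ℝ), (∀ x y, 0 ≤ π x y) →
    (∀ x y, 0 ≤ S i π x y) ∧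
    (∀ x, x ∉ Js i → ∀ y, S i π x y = 0) ∧
    ∀ π' : ↥(Js i) → Y → ℝ, (∀ (j : Js i) (y : Y), 0 ≤ π' j y) →
      EJfun (fun (j : Js i) y => c j y) ε φ₁ φ₂ (fun (j : Js i) => μ j) ν
          (outMarg (Js i) π) (fun (j : Js i) y => S i π j y)
        ≤ EJfun (fun (j : Js i) y => c j y) ε φ₁ φ₂ (fun (j : Js i) => μ j) ν
          (outMarg (Js i) π) π'

/-- One parallel domain decomposition iteration with weight rule `Θ`: solve all
cell subproblems in parallel and take the convex combination of old and new cell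
plans with weights `Θ((π_J)_J, (π̃_J)_J)`. -/
def parUpdate {X Y : Type*} {n : ℕ} (Js : Fin n → Set X)
    (S : Fin n → (X → Y → ℝ) → (X → Y → ℝ))
    (Θ : (Fin n → X → Y → ℝ) → (Fin n → X → Y → ℝ) → Fin n → ℝ)
    (π : X → Y → ℝ) : X → Y → ℝ :=
  combPlan (fun i => cellRestr (Js i) π) (fun i => S i π)
    (Θ (fun i => cellRestr (Js i) π) (fun i => S i π))

/-!
The entropic term makes the objective `E` strictly convex on nonnegative plans, with compact
sublevel sets. A plan that solves all its cell subproblems is in particular optimal in each row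
separately. Since the entropy has slope `-∞` at `0`, such a plan is strictly positive, hence a
point where `E` is differentiable; row-wise optimality then annihilates the whole derivative, and
by convexity the plan is the global minimizer. So every other plan is moved by the parallel update,
which strictly decreases `E` there.

By uniqueness of the cell minimizers and compactness, the solve maps are continuous on sublevel
sets of `E`, and so is the update. Along a subsequence on which the update is applied, the iterates
converge to some plan `q`, their images to the update of `q`, and as the energies decrease to a
common limit, `E` takes the same value at `q` and at its update; hence `q` is the minimizer.
-/

section Convexity

theorem convexOn_finset_sum {𝕜 E β ι : Type*} [Semiring 𝕜] [PartialOrder 𝕜] [AddCommMonoid E]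
    [AddCommMonoid β] [PartialOrder β] [IsOrderedAddMonoid β] [SMul 𝕜 E] [Module 𝕜 β]
    {s : Set E} (hs : Convex 𝕜 s) {t : Finset ι} {f : ι → E → β}
    (hf : ∀ i ∈ t, ConvexOn 𝕜 s (f i)) : ConvexOn 𝕜 s fun x => ∑ i ∈ t, f i x := by
  refine ⟨hs, fun x hx y hy a b ha hb hab => ?_⟩
  rw [Finset.smul_sum, Finset.smul_sum, ← Finset.sum_add_distrib]
  exact Finset.sum_le_sum fun i hi => (hf i hi).2 hx hy ha hb hab

theorem strictConvexOn_sum_apply {𝕜 β ι : Type*} {E : ι → Type*} [Semiring 𝕜] [PartialOrder 𝕜]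
    [∀ i, AddCommMonoid (E i)] [AddCommMonoid β] [PartialOrder β] [IsOrderedCancelAddMonoid β]
    [∀ i, Module 𝕜 (E i)] [Module 𝕜 β] [Fintype ι]
    {s : ∀ i, Set (E i)} {f : ∀ i, E i → β} (hf : ∀ i, StrictConvexOn 𝕜 (s i) (f i)) :
    StrictConvexOn 𝕜 (Set.univ.pi s) fun p => ∑ i, f i (p i) := by
  refine ⟨convex_pi fun i _ => (hf i).1, fun p hp q hq hpq a b ha hb hab => ?_⟩
  obtain ⟨i, hi⟩ := Function.ne_iff.1 hpq
  rw [Finset.smul_sum, Finset.smul_sum, ← Finset.sum_add_distrib]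
  exact Finset.sum_lt_sum
    (fun j _ => (hf j).convexOn.2 (hp j trivial) (hq j trivial) ha.le hb.le hab)
    ⟨i, Finset.mem_univ i, (hf i).2 (hp i trivial) (hq i trivial) hi ha hb hab⟩

theorem isMinOn_of_convexOn_of_hasFDerivAt_zero {E : Type*} [NormedAddCommGroup E]
    [NormedSpace ℝ E] {s : Set E} {f : E → ℝ} {p : E} (hf : ConvexOn ℝ s f) (hp : p ∈ s)
    (hderiv : HasFDerivAt f (0 : E →L[ℝ] ℝ) p) : IsMinOn f s p := by
  intro q hq
  have hconv : ConvexOn ℝ (AffineMap.lineMap p q ⁻¹' s) (f ∘ AffineMap.lineMap p q) :=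
    hf.comp_affineMap (AffineMap.lineMap p q)
  have hline : HasDerivAt (f ∘ AffineMap.lineMap p q) (0 : ℝ) (0 : ℝ) := by
    have hderiv' : HasFDerivAt f (0 : E →L[ℝ] ℝ) (AffineMap.lineMap p q (0 : ℝ)) := by
      simpa using hderiv
    simpa using hderiv'.comp_hasDerivAt (0 : ℝ) AffineMap.hasDerivAt_lineMap
  have hslope := hconv.le_slope_of_hasDerivAt (x := 0) (y := 1) (by simpa using hp)
    (by simpa using hq) one_pos hline
  simpa [slope_def_field] using hslope

theorem hasFDerivAt_eq_zero_of_isLocalMin_update {ι : Type*} {E : ι → Type*} [Finite ι]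
    [∀ i, NormedAddCommGroup (E i)] [∀ i, NormedSpace ℝ (E i)] {F : (∀ i, E i) → ℝ}
    {L : (∀ i, E i) →L[ℝ] ℝ} {π : ∀ i, E i} (hF : HasFDerivAt F L π)
    (hmin : ∀ i, IsLocalMin (fun v => F (Function.update π i v)) (π i)) : L = 0 := by
  have := Fintype.ofFinite ι
  refine ContinuousLinearMap.coe_injective (LinearMap.pi_ext fun i v => ?_)
  have hF' : HasFDerivAt F L (Function.update π i (π i)) := by rwa [Function.update_eq_self]
  have hzero := (hmin i).hasFDerivAt_eq_zero (hF'.comp (π i) (hasFDerivAt_update π (π i)))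
  have happly := DFunLike.congr_fun hzero v
  have hsingle : ContinuousLinearMap.pi (Pi.single i (.id ℝ (E i))) v = Pi.single i v := by
    ext j
    rcases eq_or_ne j i with rfl | hji <;> simp [*]
  simpa [hsingle] using happly

end Convexity

section Compactness

theorem continuousOn_of_isMinOn {P Q β : Type*} [TopologicalSpace P] [TopologicalSpace Q]
    [Preorder β] [TopologicalSpace β] [OrderClosedTopology β] {A : Set P} {K : Set Q}
    (hK : IsCompact K) {G : P → Q → β} (hG : ContinuousOn (Function.uncurry G) (A ×ˢ K))
    {s : P → Q} (hs : Set.MapsTo s A K) (hmin : ∀ p ∈ A, IsMinOn (G p) K (s p))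
    (huniq : ∀ p ∈ A, ∀ q ∈ K, IsMinOn (G p) K q → q = s p) : ContinuousOn s A := by
  intro p hp
  have hsK : ∀ᶠ p' in 𝓝[A] p, s p' ∈ K := eventually_mem_nhdsWithin.mono hs
  refine hK.tendsto_nhds_of_unique_mapClusterPt hsK fun q hq hcluster =>
    huniq p hp q hq fun r hr => ?_
  obtain ⟨U, hU, hsq⟩ := mapClusterPt_iff_ultrafilter.1 hcluster
  have hUp : Tendsto id U (𝓝 p) := hU.trans nhdsWithin_le_nhds
  have hUA : ∀ᶠ p' in U, p' ∈ A := hU eventually_mem_nhdsWithin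
  have hlim : ∀ {t : P → Q} {q' : Q}, q' ∈ K → (∀ᶠ p' in U, t p' ∈ K) → Tendsto t U (𝓝 q') →
      Tendsto (fun p' => G p' (t p')) U (𝓝 (G p q')) := fun hq' htK ht =>
    (hG (p, _) ⟨hp, hq'⟩).tendsto.comp <| tendsto_nhdsWithin_iff.2
      ⟨hUp.prodMk_nhds ht, hUA.and htK⟩
  exact le_of_tendsto_of_tendsto (hlim hq (hU hsK) hsq)
    (hlim hr (.of_forall fun _ => hr) tendsto_const_nhds)
    (hUA.mono fun p' hp' => hmin p' hp' hr)

theorem tendsto_minimizer_of_frequently_step {P : Type*} [TopologicalSpace P] {K : Set P}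
    (hK : IsCompact K) {F : P → ℝ} (hF : ContinuousOn F K) {T : P → P} (hT : ContinuousOn T K)
    (hTK : Set.MapsTo T K K) {p : P} (hp : IsMinOn F K p)
    (huniq : ∀ q ∈ K, IsMinOn F K q → q = p) (hdec : ∀ q ∈ K, q ≠ p → F (T q) < F q)
    {u : ℕ → P} (hu : ∀ k, u k ∈ K) (hanti : Antitone (F ∘ u))
    (hstep : ∃ᶠ k in atTop, u (k + 1) = T (u k)) : Tendsto u atTop (𝓝 p) := by
  have hlim {l : Filter ℕ} {v : ℕ → P} {q : P} (hv : ∀ k, v k ∈ K)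
      (h : Tendsto v l (𝓝 q)) : Tendsto v l (𝓝[K] q) :=
    tendsto_nhdsWithin_iff.2 ⟨h, .of_forall hv⟩
  obtain ⟨m, hm⟩ : ∃ m, Tendsto (F ∘ u) atTop (𝓝 m) :=
    ⟨_, tendsto_atTop_ciInf hanti ⟨F p, Set.forall_mem_range.2 fun k => hp (hu k)⟩⟩
  have hcluster {q : P} (hq : q ∈ K) {U : Ultrafilter ℕ} (hU : ↑U ≤ (atTop : Filter ℕ))
      (huq : Tendsto u U (𝓝 q)) : F q = m :=
    tendsto_nhds_unique ((hF q hq).tendsto.comp (hlim hu huq)) (hm.mono_left hU)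
  -- A cluster point of the iterates at which `T` is applied cannot be decreased by `T`.
  have hmp : m = F p := by
    have : NeBot (atTop ⊓ 𝓟 {k | u (k + 1) = T (u k)}) := frequently_mem_iff_neBot.1 hstep
    obtain ⟨U, hU⟩ := Ultrafilter.exists_le (atTop ⊓ 𝓟 {k | u (k + 1) = T (u k)})
    obtain ⟨q, hq, huq⟩ : ∃ q ∈ K, Tendsto u U (𝓝 q) :=
      hK.ultrafilter_le_nhds' (U.map u) (mem_map.2 (univ_mem' hu))
    have hFq := hcluster hq (hU.trans inf_le_left) huq
    have hTq : F (T q) = m := by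
      have hFT : Tendsto (F ∘ T ∘ u) U (𝓝 (F (T q))) :=
        (hF _ (hTK hq)).tendsto.comp <| hlim (fun k => hTK (hu k)) <|
          (hT q hq).tendsto.comp (hlim hu huq)
      refine tendsto_nhds_unique hFT (((tendsto_add_atTop_iff_nat 1).2 hm).mono_left
        (hU.trans inf_le_left) |>.congr' ?_)
      filter_upwards [(hU.trans inf_le_right) (mem_principal_self _)] with k hk
      exact congrArg F hk
    by_contra hne
    exact (hdec q hq fun h => hne (h ▸ hFq.symm)).ne (hTq.trans hFq.symm)
  refine hK.tendsto_nhds_of_unique_mapClusterPt (.of_forall hu) fun q hq hmap => ?_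
  obtain ⟨U, hU, huq⟩ := mapClusterPt_iff_ultrafilter.1 hmap
  refine huniq q hq fun r hr => ?_
  exact ((hcluster hq hU huq).trans hmp).trans_le (hp hr)

end Compactness

section Entropy

theorem continuousOn_Ici_of_convexOn_of_lowerSemicontinuousWithinAt {f : ℝ → ℝ} {a : ℝ}
    (hf : ConvexOn ℝ (Set.Ici a) f) (hlsc : LowerSemicontinuousWithinAt f (Set.Ici a) a) :
    ContinuousOn f (Set.Ici a) := by
  refine hf.continuousOn_Ici (continuousWithinAt_iff_lower_upperSemicontinuousWithinAt.2
    ⟨hlsc, fun b hb => ?_⟩)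
  let chord : ℝ → ℝ := fun x => (1 - (x - a)) * f a + (x - a) * f (a + 1)
  have hchord : Continuous chord := by fun_prop
  have hlt : chord a < b := by simpa [chord] using hb
  filter_upwards [self_mem_nhdsWithin,
    mem_nhdsWithin_of_mem_nhds (hchord.continuousAt (Iio_mem_nhds hlt)),
    mem_nhdsWithin_of_mem_nhds (Iio_mem_nhds (lt_add_one a))] with x hax hxb hx1
  refine lt_of_le_of_lt ?_ hxb
  have hle := hf.2 Set.self_mem_Ici (Set.mem_Ici.2 (le_add_of_nonneg_right zero_le_one))
    (show 0 ≤ 1 - (x - a) by linarith [Set.mem_Iio.1 hx1])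
    (sub_nonneg.2 hax) (sub_add_cancel 1 (x - a))
  rwa [smul_eq_mul, smul_eq_mul, smul_eq_mul, smul_eq_mul,
    show (1 - (x - a)) * a + (x - a) * (a + 1) = x by ring] at hle

variable {φ : ℝ → EReal} {s : ℝ}

theorem AssumptionA.coe_toReal (h : AssumptionA φ) (hs : 0 ≤ s) : ((φ s).toReal : EReal) = φ s :=
  EReal.coe_toReal (h.2.2.1 s hs) (h.1.2.2.1 s)

theorem AssumptionA.toReal_nonneg (h : AssumptionA φ) (s : ℝ) : 0 ≤ (φ s).toReal :=
  EReal.toReal_nonneg (h.2.1 s)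

theorem AssumptionA.differentiableAt_toReal (h : AssumptionA φ) (hs : 0 < s) :
    DifferentiableAt ℝ (fun s => (φ s).toReal) s :=
  (h.2.2.2.differentiableOn one_ne_zero s hs).differentiableAt (Ioi_mem_nhds hs)

theorem AssumptionA.convexOn_toReal (h : AssumptionA φ) :
    ConvexOn ℝ (Set.Ici 0) fun s => (φ s).toReal := by
  refine ⟨convex_Ici 0, fun s hs t ht a b ha hb hab => ?_⟩
  have hφ := h.1.2.1 s t a b ha hb hab
  rw [← h.coe_toReal hs, ← h.coe_toReal ht,
    ← h.coe_toReal (add_nonneg (mul_nonneg ha hs) (mul_nonneg hb ht))] at hφ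
  exact_mod_cast hφ

theorem AssumptionA.continuousOn_toReal (h : AssumptionA φ) :
    ContinuousOn (fun s => (φ s).toReal) (Set.Ici 0) := by
  refine continuousOn_Ici_of_convexOn_of_lowerSemicontinuousWithinAt h.convexOn_toReal
    fun b hb => ?_
  have hlt : (b : EReal) < φ 0 := by rw [← h.coe_toReal le_rfl]; exact_mod_cast hb
  filter_upwards [mem_nhdsWithin_of_mem_nhds (h.1.1 0 b hlt), self_mem_nhdsWithin] with s hbs hs
  rw [← h.coe_toReal hs] at hbs
  exact_mod_cast hbs

end Entropy

section FDiv

open InformationTheory (klFun klFun_apply klFun_zero klFun_nonneg)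

variable {Z : Type*} [Fintype Z] {f : ℝ → ℝ} {ρ σ : Z → ℝ}

/-- The real-valued `f`-divergence `∑ z, σ z * f (ρ z / σ z)`. Against a positive reference `σ` it
is `divergence` for `f = φ` and `KLfin` for `f = klFun`, without the detour through `EReal`. -/
def fDiv (f : ℝ → ℝ) (ρ σ : Z → ℝ) : ℝ :=
  ∑ z, σ z * f (ρ z / σ z)

theorem coe_sum_ereal {ι : Type*} (s : Finset ι) (g : ι → ℝ) :
    ((∑ i ∈ s, g i : ℝ) : EReal) = ∑ i ∈ s, (g i : EReal) := by
  induction s using Finset.induction_on with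
  | empty => simp
  | insert i s hi ih => rw [Finset.sum_insert hi, Finset.sum_insert hi, EReal.coe_add, ih]

theorem divergence_eq_coe_fDiv {φ : ℝ → EReal} (h : AssumptionA φ) (hρ : 0 ≤ ρ)
    (hσ : ∀ z, 0 < σ z) : divergence φ ρ σ = (fDiv (fun s => (φ s).toReal) ρ σ : EReal) := by
  have hsum (z : Z) : (if σ z = 0 then ρ z else 0) = 0 := if_neg (hσ z).ne'
  simp only [divergence, fDiv, hsum, Finset.sum_const_zero, EReal.coe_zero, mul_zero, add_zero,
    coe_sum_ereal, EReal.coe_mul]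
  refine Finset.sum_congr rfl fun z _ => ?_
  rw [if_pos (hσ z), h.coe_toReal (div_nonneg (hρ z) (hσ z).le)]

theorem KLfin_eq_coe_fDiv (hσ : ∀ z, 0 < σ z) :
    KLfin ρ σ = (fDiv klFun ρ σ : EReal) := by
  rw [KLfin, if_pos fun z hz => absurd hz (hσ z).ne', EReal.coe_eq_coe_iff, fDiv]
  refine Finset.sum_congr rfl fun z _ => ?_
  rw [klFun_apply]
  field_simp [(hσ z).ne']
  ring

theorem fDiv_nonneg (hf : ∀ s, 0 ≤ s → 0 ≤ f s) (hρ : 0 ≤ ρ) (hσ : 0 ≤ σ) : 0 ≤ fDiv f ρ σ :=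
  Finset.sum_nonneg fun z _ => mul_nonneg (hσ z) (hf _ (div_nonneg (hρ z) (hσ z)))

theorem convexOn_fDiv (hf : ConvexOn ℝ (Set.Ici 0) f) (hσ : 0 ≤ σ) :
    ConvexOn ℝ (Set.Ici 0) fun ρ => fDiv f ρ σ := by
  refine convexOn_finset_sum (convex_Ici 0) fun z _ => ?_
  have hsub : Set.Ici 0 ⊆ ((σ z)⁻¹ • LinearMap.proj z : (Z → ℝ) →ₗ[ℝ] ℝ) ⁻¹' Set.Ici 0 :=
    fun ρ hρ => mul_nonneg (inv_nonneg.2 (hσ z)) (hρ z)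
  have hscale := (hf.comp_linearMap ((σ z)⁻¹ • LinearMap.proj z)).subset hsub (convex_Ici 0)
  simpa [Function.comp_def, div_eq_inv_mul] using hscale.smul (hσ z)

theorem strictConvexOn_fDiv (hf : StrictConvexOn ℝ (Set.Ici 0) f) (hσ : ∀ z, 0 < σ z) :
    StrictConvexOn ℝ (Set.Ici 0) fun ρ => fDiv f ρ σ := by
  rw [← Set.pi_univ_Ici]
  refine strictConvexOn_sum_apply (𝕜 := ℝ) (f := fun z s => σ z * f (s / σ z)) fun z =>
    ⟨convex_Ici _, fun s hs t ht hst a b ha hb hab => ?_⟩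
  have hlt := hf.2 (div_nonneg hs (hσ z).le) (div_nonneg ht (hσ z).le)
    (fun h => hst ((div_left_inj' (hσ z).ne').1 h)) ha hb hab
  calc σ z * f ((a • s + b • t) / σ z) = σ z * f (a • (s / σ z) + b • (t / σ z)) := by
        rw [add_div, smul_div_assoc, smul_div_assoc]
    _ < σ z * (a • f (s / σ z) + b • f (t / σ z)) := mul_lt_mul_of_pos_left hlt (hσ z)
    _ = a • (σ z * f (s / σ z)) + b • (σ z * f (t / σ z)) := by
        rw [mul_add, mul_smul_comm, mul_smul_comm]

theorem continuousOn_fDiv (hf : ContinuousOn f (Set.Ici 0)) (hσ : 0 ≤ σ) :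
    ContinuousOn (fun ρ => fDiv f ρ σ) (Set.Ici 0) :=
  continuousOn_finsetSum _ fun z _ => continuousOn_const.mul <|
    hf.comp (by fun_prop) fun _ hρ => div_nonneg (hρ z) (hσ z)

theorem differentiableAt_fDiv (hf : ∀ s, 0 < s → DifferentiableAt ℝ f s) (hρ : ∀ z, 0 < ρ z)
    (hσ : ∀ z, 0 < σ z) : DifferentiableAt ℝ (fun ρ => fDiv f ρ σ) ρ :=
  .fun_sum fun z _ => ((hf _ (div_pos (hρ z) (hσ z))).comp ρ (by fun_prop)).const_mul (σ z)

theorem mul_le_klFun_add_exp (a : ℝ) {s : ℝ} (hs : 0 ≤ s) :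
    a * s ≤ klFun s + (Real.exp a - 1) := by
  have hnonneg := mul_nonneg (Real.exp_pos a).le
    (klFun_nonneg (div_nonneg hs (Real.exp_pos a).le))
  have heq : Real.exp a * klFun (s / Real.exp a)
      = klFun s + (Real.exp a - 1) - a * s := by
    rcases hs.eq_or_lt with rfl | hs
    · rw [zero_div, klFun_zero]
      ring
    · rw [klFun_apply, klFun_apply,
        Real.log_div hs.ne' (Real.exp_pos a).ne', Real.log_exp]
      field_simp
      ring
  linarith

theorem exists_mul_add_klFun_lt (K : ℝ) {ε m : ℝ} (hε : 0 < ε) (hm : 0 < m) :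
    ∃ t ∈ Set.Ioc (0 : ℝ) 1, t * K + ε * (m * klFun (t / m))
      < ε * (m * klFun 0) := by
  have hr : 0 < m * Real.exp (-K / ε) := by positivity
  refine ⟨min 1 (m * Real.exp (-K / ε)), ⟨lt_min one_pos hr, min_le_left _ _⟩, ?_⟩
  set t := min 1 (m * Real.exp (-K / ε))
  have ht : 0 < t := lt_min one_pos hr
  have hlog : Real.log (t / m) ≤ -K / ε := by
    rw [Real.log_le_iff_le_exp (div_pos ht hm), div_le_iff₀' hm]
    exact min_le_right _ _
  have hslope : K + ε * (Real.log (t / m) - 1) < 0 := by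
    have hscaled := mul_le_mul_of_nonneg_left hlog hε.le
    rw [mul_div_cancel₀ _ hε.ne'] at hscaled
    linarith
  calc t * K + ε * (m * klFun (t / m))
      = ε * (m * klFun 0) + t * (K + ε * (Real.log (t / m) - 1)) := by
        rw [klFun_apply, klFun_zero]
        field_simp
        ring
    _ < _ := add_lt_of_neg_right _ (mul_neg_of_pos_of_neg ht hslope)

end FDiv

section Energy

open InformationTheory (klFun strictConvexOn_klFun continuous_klFun hasDerivAt_klFun)

variable {X Y : Type*} [Fintype X] [Fintype Y]

/-- The unregularized part `⟨c, π⟩ + D_{f₁}(P_X π | μ) + D_{f₂}(P_Y π + νm | ν)` of the real-valued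
objective; it is convex on nonnegative plans but not strictly so. -/
def unregEnergy (c : X → Y → ℝ) (f₁ f₂ : ℝ → ℝ) (μ : X → ℝ) (ν νm : Y → ℝ) (π : X → Y → ℝ) : ℝ :=
  (∑ x, ∑ y, c x y * π x y) + fDiv f₁ (fun x => ∑ y, π x y) μ
    + fDiv f₂ (fun y => (∑ x, π x y) + νm y) ν

/-- The entropic regularizer `KL(π | μ ⊗ ν)`, summed row by row. -/
def relEntropy (μ : X → ℝ) (ν : Y → ℝ) (π : X → Y → ℝ) : ℝ :=
  ∑ x, fDiv klFun (π x) fun y => μ x * ν y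

/-- The real-valued objective: `EJfun` on nonnegative plans (see `EJfun_eq_coe_energy`), with the
entropy functions replaced by their real parts `f₁`, `f₂`. -/
def energy (c : X → Y → ℝ) (ε : ℝ) (f₁ f₂ : ℝ → ℝ) (μ : X → ℝ) (ν νm : Y → ℝ)
    (π : X → Y → ℝ) : ℝ :=
  unregEnergy c f₁ f₂ μ ν νm π + ε * relEntropy μ ν π

variable (c : X → Y → ℝ) {ε : ℝ} {f₁ f₂ : ℝ → ℝ} {μ : X → ℝ} {ν νm : Y → ℝ} {π : X → Y → ℝ}

theorem EJfun_eq_coe_energy (ε : ℝ) {φ₁ φ₂ : ℝ → EReal} (h₁ : AssumptionA φ₁)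
    (h₂ : AssumptionA φ₂) (hμ : ∀ x, 0 < μ x) (hν : ∀ y, 0 < ν y) (hνm : 0 ≤ νm) (hπ : 0 ≤ π) :
    EJfun c ε φ₁ φ₂ μ ν νm π
      = (energy c ε (fun s => (φ₁ s).toReal) (fun s => (φ₂ s).toReal) μ ν νm π : EReal) := by
  have hKL : fDiv klFun (fun p : X × Y => π p.1 p.2) (fun p => μ p.1 * ν p.2)
      = relEntropy μ ν π := Fintype.sum_prod_type _
  rw [EJfun, KLfin_eq_coe_fDiv fun p : X × Y => mul_pos (hμ p.1) (hν p.2), hKL,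
    divergence_eq_coe_fDiv h₁ (fun x => Finset.sum_nonneg fun y _ => hπ x y) hμ,
    divergence_eq_coe_fDiv h₂
      (fun y => add_nonneg (Finset.sum_nonneg fun x _ => hπ x y) (hνm y)) hν]
  norm_cast
  rw [energy, unregEnergy]
  ring

theorem convexOn_unregEnergy (hf₁ : ConvexOn ℝ (Set.Ici 0) f₁) (hf₂ : ConvexOn ℝ (Set.Ici 0) f₂)
    (hμ : 0 ≤ μ) (hν : 0 ≤ ν) (hνm : 0 ≤ νm) :
    ConvexOn ℝ (Set.Ici 0) (unregEnergy c f₁ f₂ μ ν νm) := by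
  have hcost : IsLinearMap ℝ fun π : X → Y → ℝ => ∑ x, ∑ y, c x y * π x y :=
    ⟨fun π π' => by simp [mul_add, Finset.sum_add_distrib],
      fun a π => by simp [mul_left_comm, Finset.mul_sum]⟩
  have hrow : IsLinearMap ℝ fun (π : X → Y → ℝ) x => ∑ y, π x y :=
    ⟨fun π π' => by ext; simp [Finset.sum_add_distrib], fun a π => by ext; simp [Finset.mul_sum]⟩
  have hcol : IsLinearMap ℝ fun (π : X → Y → ℝ) y => ∑ x, π x y :=
    ⟨fun π π' => by ext; simp [Finset.sum_add_distrib], fun a π => by ext; simp [Finset.mul_sum]⟩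
  refine (((hcost.mk' _).convexOn (convex_Ici 0)).add ?_).add ?_
  · exact ((convexOn_fDiv hf₁ hμ).comp_linearMap (hrow.mk' _)).subset
      (fun π hπ x => Finset.sum_nonneg fun y _ => hπ x y) (convex_Ici 0)
  · exact (((convexOn_fDiv hf₂ hν).translate_left νm).comp_linearMap (hcol.mk' _)).subset
      (fun π hπ y => add_nonneg (hνm y) (Finset.sum_nonneg fun x _ => hπ x y)) (convex_Ici 0)

theorem strictConvexOn_relEntropy (hμ : ∀ x, 0 < μ x) (hν : ∀ y, 0 < ν y) :
    StrictConvexOn ℝ (Set.Ici 0) (relEntropy μ ν) := by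
  rw [← Set.pi_univ_Ici]
  exact strictConvexOn_sum_apply fun x =>
    strictConvexOn_fDiv strictConvexOn_klFun fun y => mul_pos (hμ x) (hν y)

theorem strictConvexOn_energy (hε : 0 < ε) (hf₁ : ConvexOn ℝ (Set.Ici 0) f₁)
    (hf₂ : ConvexOn ℝ (Set.Ici 0) f₂) (hμ : ∀ x, 0 < μ x) (hν : ∀ y, 0 < ν y) (hνm : 0 ≤ νm) :
    StrictConvexOn ℝ (Set.Ici 0) (energy c ε f₁ f₂ μ ν νm) := by
  have hentropy := strictConvexOn_relEntropy hμ hν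
  refine (convexOn_unregEnergy c hf₁ hf₂ (fun x => (hμ x).le) (fun y => (hν y).le)
    hνm).add_strictConvexOn ⟨hentropy.1, fun π hπ π' hπ' hne a b ha hb hab => ?_⟩
  calc ε * relEntropy μ ν (a • π + b • π')
      < ε * (a • relEntropy μ ν π + b • relEntropy μ ν π') :=
        mul_lt_mul_of_pos_left (hentropy.2 hπ hπ' hne ha hb hab) hε
    _ = a • (ε * relEntropy μ ν π) + b • (ε * relEntropy μ ν π') := by
        rw [mul_add, mul_smul_comm, mul_smul_comm]

theorem continuousOn_energy (ε : ℝ) (hf₁ : ContinuousOn f₁ (Set.Ici 0))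
    (hf₂ : ContinuousOn f₂ (Set.Ici 0)) (hμ : 0 ≤ μ) (hν : 0 ≤ ν) (hνm : 0 ≤ νm) :
    ContinuousOn (energy c ε f₁ f₂ μ ν νm) (Set.Ici 0) := by
  refine .add (.add (.add (by fun_prop) ?_) ?_) (continuousOn_const.mul ?_)
  · exact (continuousOn_fDiv hf₁ hμ).comp (by fun_prop)
      fun π hπ x => Finset.sum_nonneg fun y _ => hπ x y
  · exact (continuousOn_fDiv hf₂ hν).comp (by fun_prop)
      fun π hπ y => add_nonneg (Finset.sum_nonneg fun x _ => hπ x y) (hνm y)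
  · exact continuousOn_finsetSum _ fun x _ =>
      (continuousOn_fDiv continuous_klFun.continuousOn
        fun y => mul_nonneg (hμ x) (hν y)).comp (by fun_prop) fun π hπ => hπ x

theorem differentiableAt_energy [Nonempty X] [Nonempty Y] (ε : ℝ)
    (hf₁ : ∀ s, 0 < s → DifferentiableAt ℝ f₁ s) (hf₂ : ∀ s, 0 < s → DifferentiableAt ℝ f₂ s)
    (hμ : ∀ x, 0 < μ x) (hν : ∀ y, 0 < ν y) (hνm : 0 ≤ νm) (hπ : ∀ x y, 0 < π x y) :
    DifferentiableAt ℝ (energy c ε f₁ f₂ μ ν νm) π := by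
  refine .add (.add (.add (by fun_prop) ?_) ?_) (.const_mul (.fun_sum fun x _ => ?_) ε)
  · exact (differentiableAt_fDiv hf₁ (fun x => Finset.sum_pos (fun y _ => hπ x y)
      Finset.univ_nonempty) hμ).comp π (f := fun π x => ∑ y, π x y) (by fun_prop)
  · exact (differentiableAt_fDiv hf₂ (fun y => add_pos_of_pos_of_nonneg (Finset.sum_pos
      (fun x _ => hπ x y) Finset.univ_nonempty) (hνm y)) hν).comp π
      (f := fun π y => (∑ x, π x y) + νm y) (by fun_prop)
  · exact (differentiableAt_fDiv (fun s hs => (hasDerivAt_klFun hs.ne').differentiableAt) (hπ x)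
      fun y => mul_pos (hμ x) (hν y)).comp π (f := fun π => π x) (by fun_prop)

theorem exists_le_energy_add (hε : 0 < ε) (hf₁ : ∀ s, 0 ≤ s → 0 ≤ f₁ s)
    (hf₂ : ∀ s, 0 ≤ s → 0 ≤ f₂ s) (hμ : ∀ x, 0 < μ x) (hν : ∀ y, 0 < ν y) (hνm : 0 ≤ νm) :
    ∃ D, ∀ π : X → Y → ℝ, 0 ≤ π → ∀ x y, π x y ≤ energy c ε f₁ f₂ μ ν νm π + D := by
  let slack : X → Y → ℝ := fun x y => ε * (μ x * ν y * (Real.exp ((1 - c x y) / ε) - 1))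
  have hentry (x : X) (y : Y) {t : ℝ} (ht : 0 ≤ t) :
      t ≤ c x y * t + ε * (μ x * ν y * klFun (t / (μ x * ν y))) + slack x y := by
    have hm : 0 < μ x * ν y := mul_pos (hμ x) (hν y)
    have hyoung := mul_le_mul_of_nonneg_left
      (mul_le_klFun_add_exp ((1 - c x y) / ε) (div_nonneg ht hm.le)) (mul_pos hε hm).le
    have hlhs : ε * (μ x * ν y) * ((1 - c x y) / ε * (t / (μ x * ν y))) = (1 - c x y) * t := by
      rw [mul_mul_mul_comm, mul_div_cancel₀ _ hε.ne', mul_div_cancel₀ _ hm.ne']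
    linear_combination hyoung - hlhs
  refine ⟨∑ x, ∑ y, slack x y, fun π hπ x y => ?_⟩
  have hrow : 0 ≤ fDiv f₁ (fun x => ∑ y, π x y) μ :=
    fDiv_nonneg hf₁ (fun x => Finset.sum_nonneg fun y _ => hπ x y) fun x => (hμ x).le
  have hcol : 0 ≤ fDiv f₂ (fun y => (∑ x, π x y) + νm y) ν :=
    fDiv_nonneg hf₂ (fun y => add_nonneg (Finset.sum_nonneg fun x _ => hπ x y) (hνm y))
      fun y => (hν y).le
  calc π x y ≤ ∑ y, π x y :=
        Finset.single_le_sum (f := π x) (fun y _ => hπ x y) (Finset.mem_univ y)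
    _ ≤ ∑ x, ∑ y, π x y :=
        Finset.single_le_sum (f := fun x => ∑ y, π x y)
          (fun x _ => Finset.sum_nonneg fun y _ => hπ x y) (Finset.mem_univ x)
    _ ≤ ∑ x, ∑ y, (c x y * π x y + ε * (μ x * ν y * klFun (π x y / (μ x * ν y))) + slack x y) :=
        Finset.sum_le_sum fun x _ => Finset.sum_le_sum fun y _ => hentry x y (hπ x y)
    _ = (∑ x, ∑ y, c x y * π x y) + ε * relEntropy μ ν π + ∑ x, ∑ y, slack x y := by
        simp only [relEntropy, fDiv, Finset.sum_add_distrib, Finset.mul_sum]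
    _ ≤ energy c ε f₁ f₂ μ ν νm π + ∑ x, ∑ y, slack x y := by
        rw [energy, unregEnergy]
        linarith

theorem isCompact_energy_sublevel (hε : 0 < ε) (hf₁ : ∀ s, 0 ≤ s → 0 ≤ f₁ s)
    (hf₂ : ∀ s, 0 ≤ s → 0 ≤ f₂ s) (hf₁c : ContinuousOn f₁ (Set.Ici 0))
    (hf₂c : ContinuousOn f₂ (Set.Ici 0)) (hμ : ∀ x, 0 < μ x) (hν : ∀ y, 0 < ν y) (hνm : 0 ≤ νm)
    (M : ℝ) : IsCompact {π ∈ Set.Ici 0 | energy c ε f₁ f₂ μ ν νm π ≤ M} := by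
  obtain ⟨D, hD⟩ := exists_le_energy_add c hε hf₁ hf₂ hμ hν hνm
  have hbox : IsCompact (Set.Icc 0 fun (_ : X) (_ : Y) => M + D) := isCompact_Icc
  have hcont := continuousOn_energy c ε hf₁c hf₂c (fun x => (hμ x).le) (fun y => (hν y).le) hνm
  refine hbox.of_isClosed_subset (hcont.preimage_isClosed_of_isClosed isClosed_Ici isClosed_Iic)
    fun π hπ => ⟨hπ.1, fun x y => (hD π hπ.1 x y).trans (add_le_add_left hπ.2 D)⟩

theorem sum_update_apply {ι M : Type*} {E : ι → Type*} [Fintype ι] [AddCommMonoid M]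
    (G : ∀ i, E i → M) (p : ∀ i, E i) (i : ι) (v : E i) :
    ∑ j, G j (Function.update p i v j) = G i v + ∑ j ∈ Finset.univ.erase i, G j (p j) := by
  rw [← Finset.add_sum_erase _ _ (Finset.mem_univ i), Function.update_self]
  refine congrArg _ (Finset.sum_congr rfl fun j hj => ?_)
  rw [Function.update_of_ne (Finset.ne_of_mem_erase hj)]

theorem relEntropy_update_sub (μ : X → ℝ) (ν : Y → ℝ) (π : X → Y → ℝ) (x : X) (y : Y) (t : ℝ) :
    relEntropy μ ν (Function.update π x (Function.update (π x) y t)) - relEntropy μ ν π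
      = μ x * ν y * klFun (t / (μ x * ν y)) - μ x * ν y * klFun (π x y / (μ x * ν y)) := by
  have hentry (s : ℝ) := calc
    relEntropy μ ν (Function.update π x (Function.update (π x) y s))
      = fDiv klFun (Function.update (π x) y s) (fun y' => μ x * ν y')
          + ∑ x' ∈ Finset.univ.erase x, fDiv klFun (π x') fun y' => μ x' * ν y' :=
        sum_update_apply (fun x' v => fDiv klFun v fun y' => μ x' * ν y') π x _
    _ = μ x * ν y * klFun (s / (μ x * ν y))
          + ∑ y' ∈ Finset.univ.erase y, μ x * ν y' * klFun (π x y' / (μ x * ν y'))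
          + ∑ x' ∈ Finset.univ.erase x, fDiv klFun (π x') fun y' => μ x' * ν y' :=
        congrArg (· + _)
          (sum_update_apply (fun y' s => μ x * ν y' * klFun (s / (μ x * ν y'))) (π x) y s)
  have hself := hentry (π x y)
  rw [Function.update_eq_self, Function.update_eq_self] at hself
  rw [hentry t, hself]
  ring

/- At a vanishing entry the entropy has slope `-∞`, which beats the finite slope of the
unregularized part. -/
theorem pos_of_isMinOn_energy_update (hε : 0 < ε) (hf₁ : ConvexOn ℝ (Set.Ici 0) f₁)
    (hf₂ : ConvexOn ℝ (Set.Ici 0) f₂) (hμ : ∀ x, 0 < μ x) (hν : ∀ y, 0 < ν y) (hνm : 0 ≤ νm)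
    (hπ : 0 ≤ π) {x : X}
    (hmin : IsMinOn (fun v => energy c ε f₁ f₂ μ ν νm (Function.update π x v)) (Set.Ici 0) (π x))
    (y : Y) : 0 < π x y := by
  refine (hπ x y).lt_of_ne fun (hzero : 0 = π x y) => ?_
  let entry : ℝ → X → Y → ℝ := fun t => Function.update π x (Function.update (π x) y t)
  have hentry_nonneg {t : ℝ} (ht : 0 ≤ t) : 0 ≤ Function.update (π x) y t :=
    le_update_iff.2 ⟨ht, fun y' _ => hπ x y'⟩
  set H := unregEnergy c f₁ f₂ μ ν νm
  obtain ⟨t, ⟨ht0, ht1⟩, hlt⟩ :=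
    exists_mul_add_klFun_lt (H (entry 1) - H π) hε (mul_pos (hμ x) (hν y))
  have hconv : H (entry t) ≤ (1 - t) • H π + t • H (entry 1) := by
    have hseg : entry t = (1 - t) • π + t • entry 1 := by
      ext x' y'
      by_cases hx : x' = x
      · subst hx
        by_cases hy : y' = y
        · subst hy; simp [entry, ← hzero]
        · simp [entry, hy]; ring
      · simp [entry, hx]; ring
    rw [hseg]
    exact (convexOn_unregEnergy c hf₁ hf₂ (fun x => (hμ x).le) (fun y => (hν y).le) hνm).2 hπ
      (Set.mem_Ici.2 (le_update_iff.2 ⟨hentry_nonneg zero_le_one, fun x' _ => hπ x'⟩))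
      (sub_nonneg.2 ht1) ht0.le (sub_add_cancel 1 t)
  have hle : energy c ε f₁ f₂ μ ν νm π ≤ energy c ε f₁ f₂ μ ν νm (entry t) := by
    simpa using hmin (hentry_nonneg ht0.le)
  have hentropy := relEntropy_update_sub μ ν π x y t
  rw [← hzero, zero_div] at hentropy
  rw [energy, energy] at hle
  simp only [smul_eq_mul] at hconv
  linarith [congrArg (ε * ·) hentropy]

theorem isMinOn_energy_of_isMinOn_update [Nonempty X] [Nonempty Y] (hε : 0 < ε)
    (hf₁ : ConvexOn ℝ (Set.Ici 0) f₁) (hf₂ : ConvexOn ℝ (Set.Ici 0) f₂)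
    (hf₁d : ∀ s, 0 < s → DifferentiableAt ℝ f₁ s) (hf₂d : ∀ s, 0 < s → DifferentiableAt ℝ f₂ s)
    (hμ : ∀ x, 0 < μ x) (hν : ∀ y, 0 < ν y) (hνm : 0 ≤ νm) (hπ : 0 ≤ π)
    (hmin : ∀ x, IsMinOn (fun v => energy c ε f₁ f₂ μ ν νm (Function.update π x v))
      (Set.Ici 0) (π x)) :
    IsMinOn (energy c ε f₁ f₂ μ ν νm) (Set.Ici 0) π := by
  have hpos (x : X) (y : Y) : 0 < π x y :=
    pos_of_isMinOn_energy_update c hε hf₁ hf₂ hμ hν hνm hπ (hmin x) y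
  have hderiv := (differentiableAt_energy c ε hf₁d hf₂d hμ hν hνm hpos).hasFDerivAt
  have hnhds (x : X) : Set.Ici 0 ∈ 𝓝 (π x) := by
    rw [← Set.pi_univ_Ici]
    exact set_pi_mem_nhds Set.finite_univ fun y _ => Ici_mem_nhds (hpos x y)
  refine isMinOn_of_convexOn_of_hasFDerivAt_zero
    (strictConvexOn_energy c hε hf₁ hf₂ hμ hν hνm).convexOn hπ ?_
  rw [← hasFDerivAt_eq_zero_of_isLocalMin_update hderiv fun x => (hmin x).isLocalMin (hnhds x)]
  exact hderiv

theorem energy_eq_sum_rows_add (ε : ℝ) (f₁ f₂ : ℝ → ℝ) (μ : X → ℝ) (ν νm : Y → ℝ)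
    (π : X → Y → ℝ) :
    energy c ε f₁ f₂ μ ν νm π
      = ∑ x, ((∑ y, c x y * π x y) + μ x * f₁ ((∑ y, π x y) / μ x)
          + ε * fDiv klFun (π x) fun y => μ x * ν y)
        + fDiv f₂ (fun y => (∑ x, π x y) + νm y) ν := by
  rw [energy, unregEnergy, relEntropy, fDiv, Finset.sum_add_distrib, Finset.sum_add_distrib,
    Finset.mul_sum]
  ring

theorem exists_energy_piecewise_eq (ε : ℝ) (f₁ f₂ : ℝ → ℝ) (μ : X → ℝ) (ν : Y → ℝ) (J : Set X)
    (π : X → Y → ℝ) :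
    ∃ r, ∀ p : X → Y → ℝ, energy c ε f₁ f₂ μ ν 0 (J.piecewise p π)
      = energy (fun (j : J) y => c j y) ε f₁ f₂ (fun j : J => μ j) ν (outMarg J π)
          (fun (j : J) y => p j y) + r := by
  let row : X → (Y → ℝ) → ℝ := fun x v =>
    (∑ y, c x y * v y) + μ x * f₁ ((∑ y, v y) / μ x) + ε * fDiv klFun v fun y => μ x * ν y
  refine ⟨∑ x : {x // x ∉ J}, row x (π x), fun p => ?_⟩
  have hin (x : J) : J.piecewise p π x = p x := Set.piecewise_eq_of_mem _ _ _ x.2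
  have hout (x : {x // x ∉ J}) : J.piecewise p π x = π x := Set.piecewise_eq_of_notMem _ _ _ x.2
  have hsplit (g : X → ℝ) : ∑ x, g x = (∑ x : J, g x) + ∑ x : {x // x ∉ J}, g x :=
    (Fintype.sum_subtype_add_sum_subtype (· ∈ J) g).symm
  have hcol (y : Y) : ∑ x, J.piecewise p π x y = (∑ x : J, p x y) + outMarg J π y := by
    rw [outMarg, hsplit, hsplit fun x => Jᶜ.indicator (fun x' => π x' y) x]
    simp only [hin, hout]
    simp
  have hrows : ∑ x, row x (J.piecewise p π x)
      = (∑ x : J, row x (p x)) + ∑ x : {x // x ∉ J}, row x (π x) := by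
    simp only [hsplit fun x => row x (J.piecewise p π x), hin, hout]
  rw [energy_eq_sum_rows_add, energy_eq_sum_rows_add]
  simp only [hcol, Pi.zero_apply, add_zero]
  rw [add_right_comm, ← hrows]

end Energy

section CellSolver

variable {X Y : Type*} {F : (X → Y → ℝ) → ℝ} {J : Set X} {s : (X → Y → ℝ) → X → Y → ℝ}
  {π : X → Y → ℝ}

/-- The nonnegative plans on the cell `J × Y`, extended by zero to `X × Y`. -/
def cellPlans (Y : Type*) (J : Set X) : Set (X → Y → ℝ) :=
  {q | 0 ≤ q ∧ ∀ x ∉ J, q x = 0}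

theorem cellRestr_eq_piecewise (J : Set X) (π : X → Y → ℝ) : cellRestr J π = J.piecewise π 0 := by
  ext x y
  by_cases hx : x ∈ J <;> simp [cellRestr, hx]

theorem cellRestr_mem_cellPlans (hπ : 0 ≤ π) : cellRestr J π ∈ cellPlans Y J := by
  rw [cellRestr_eq_piecewise]
  exact ⟨Set.le_piecewise (fun x _ => hπ x) fun _ _ => le_rfl,
    fun x hx => Set.piecewise_eq_of_notMem _ _ _ hx⟩

theorem cellRestr_of_mem_cellPlans (hπ : π ∈ cellPlans Y J) : cellRestr J π = π := by
  ext x y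
  by_cases hx : x ∈ J
  · simp [cellRestr, hx]
  · simp [cellRestr, hx, hπ.2 x hx]

theorem piecewise_cellRestr (J : Set X) (p π : X → Y → ℝ) :
    J.piecewise (cellRestr J p) π = J.piecewise p π := by
  ext x y
  by_cases hx : x ∈ J <;> simp [cellRestr, hx]

theorem cellRestr_piecewise (J : Set X) (p π : X → Y → ℝ) :
    cellRestr J (J.piecewise p π) = cellRestr J p := by
  ext x y
  by_cases hx : x ∈ J <;> simp [cellRestr, hx]

theorem continuous_cellRestr (J : Set X) :
    Continuous (cellRestr J : (X → Y → ℝ) → X → Y → ℝ) := by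
  refine continuous_pi fun x => continuous_pi fun y => ?_
  by_cases hx : x ∈ J <;> simp only [cellRestr, hx, Set.indicator_of_mem,
    Set.indicator_of_notMem, not_false_eq_true] <;> fun_prop

theorem strictConvexOn_comp_piecewise (hF : StrictConvexOn ℝ (Set.Ici 0) F) (J : Set X)
    (hπ : 0 ≤ π) : StrictConvexOn ℝ (cellPlans Y J) fun q => F (J.piecewise q π) := by
  have hnonneg {q : X → Y → ℝ} (hq : q ∈ cellPlans Y J) : J.piecewise q π ∈ Set.Ici 0 :=
    Set.le_piecewise (fun x _ => hq.1 x) fun x _ => hπ x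
  refine ⟨fun q hq q' hq' a b ha hb _ => ⟨?_, fun x hx => ?_⟩,
    fun q hq q' hq' hne a b ha hb hab => ?_⟩
  · exact add_nonneg (smul_nonneg ha hq.1) (smul_nonneg hb hq'.1)
  · simp [hq.2 x hx, hq'.2 x hx]
  have hcomb : J.piecewise (a • q + b • q') π = a • J.piecewise q π + b • J.piecewise q' π := by
    ext x y
    by_cases hx : x ∈ J <;> simp [hx, ← add_mul, hab]
  have hinj : J.piecewise q π ≠ J.piecewise q' π := fun heq => hne <| by
    simpa only [cellRestr_piecewise, cellRestr_of_mem_cellPlans hq,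
      cellRestr_of_mem_cellPlans hq'] using congrArg (cellRestr J) heq
  simpa only [hcomb] using hF.2 (hnonneg hq) (hnonneg hq') hinj ha hb hab

/-- `s` solves the subproblems on the cell `J × Y`: among the cell plans with which the part of
`π` on the cell can be replaced, `s π` is one of least objective `F`. -/
structure IsCellSolver (F : (X → Y → ℝ) → ℝ) (J : Set X)
    (s : (X → Y → ℝ) → X → Y → ℝ) : Prop where
  mem : ∀ ⦃π⦄, 0 ≤ π → s π ∈ cellPlans Y J
  isMinOn : ∀ ⦃π⦄, 0 ≤ π → IsMinOn (fun q => F (J.piecewise q π)) (cellPlans Y J) (s π)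

theorem IsCellSolver.piecewise_le (hs : IsCellSolver F J s) (hπ : 0 ≤ π) :
    F (J.piecewise (s π) π) ≤ F π := by
  simpa [piecewise_cellRestr] using hs.isMinOn hπ (cellRestr_mem_cellPlans hπ)

theorem IsCellSolver.isMinOn_update (hs : IsCellSolver F J s) (hπ : 0 ≤ π)
    (hfix : s π = cellRestr J π) {x : X} (hx : x ∈ J) :
    IsMinOn (fun v => F (Function.update π x v)) (Set.Ici 0) (π x) := by
  refine isMinOn_iff.2 fun v hv => ?_
  have hupdate : J.piecewise (Function.update π x v) π = Function.update π x v := by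
    ext x' : 1
    by_cases hx' : x' ∈ J
    · simp [hx']
    · simp [hx', (ne_of_mem_of_not_mem hx hx').symm]
  have hnonneg : 0 ≤ Function.update π x v := le_update_iff.2 ⟨hv, fun x' _ => hπ x'⟩
  have hmin := isMinOn_iff.1 (hs.isMinOn hπ) _ (cellRestr_mem_cellPlans hnonneg)
  simpa only [hfix, piecewise_cellRestr, Set.piecewise_same, hupdate, Function.update_eq_self]
    using hmin

theorem IsCellSolver.continuousOn_sublevel (hs : IsCellSolver F J s)
    (hFconv : StrictConvexOn ℝ (Set.Ici 0) F) (hFcont : ContinuousOn F (Set.Ici 0)) {M : ℝ}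
    (hM : IsCompact {π ∈ Set.Ici 0 | F π ≤ M}) :
    ContinuousOn s {π ∈ Set.Ici 0 | F π ≤ M} := by
  set A := {π ∈ Set.Ici (0 : X → Y → ℝ) | F π ≤ M}
  have hcell : cellRestr J '' A ⊆ cellPlans Y J := by
    rintro _ ⟨π, hπ, rfl⟩
    exact cellRestr_mem_cellPlans hπ.1
  have hmaps : Set.MapsTo s A (cellRestr J '' A) := fun π hπ =>
    ⟨J.piecewise (s π) π,
      ⟨Set.le_piecewise (fun x _ => (hs.mem hπ.1).1 x) fun x _ => hπ.1 x,
        (hs.piecewise_le hπ.1).trans hπ.2⟩,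
      (cellRestr_piecewise J _ _).trans (cellRestr_of_mem_cellPlans (hs.mem hπ.1))⟩
  have hpaste : Continuous fun p : (X → Y → ℝ) × (X → Y → ℝ) => J.piecewise p.2 p.1 := by
    refine continuous_pi fun x => ?_
    by_cases hx : x ∈ J <;> simp only [Set.piecewise, hx, if_true, if_false] <;> fun_prop
  refine continuousOn_of_isMinOn (G := fun π q => F (J.piecewise q π))
    (hM.image (continuous_cellRestr J)) (hFcont.comp hpaste.continuousOn ?_) hmaps
    (fun π hπ => (hs.isMinOn hπ.1).on_subset hcell) fun π hπ q hq hqmin => ?_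
  · exact fun p hp => Set.le_piecewise (fun x _ => (hcell hp.2).1 x) fun x _ => hp.1.1 x
  · have hqmin' : IsMinOn (fun q => F (J.piecewise q π)) (cellPlans Y J) q :=
      isMinOn_iff.2 fun q' hq' =>
        (isMinOn_iff.1 hqmin _ (hmaps hπ)).trans (hs.isMinOn hπ.1 hq')
    exact (strictConvexOn_comp_piecewise hFconv J hπ.1).eq_of_isMinOn hqmin' (hs.isMinOn hπ.1)
      (hcell hq) (hs.mem hπ.1)

end CellSolver

section ParallelUpdate

variable {X Y : Type*} {n : ℕ} {Js : Fin n → Set X} {S : Fin n → (X → Y → ℝ) → X → Y → ℝ}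
  {Θ : (Fin n → X → Y → ℝ) → (Fin n → X → Y → ℝ) → Fin n → ℝ} {π : X → Y → ℝ}

theorem parUpdate_nonneg (hΘ01 : ∀ πJ tπ i, Θ πJ tπ i ∈ Set.Icc (0 : ℝ) 1) (hπ : 0 ≤ π)
    (hS : ∀ i, 0 ≤ S i π) : 0 ≤ parUpdate Js S Θ π := by
  intro x y
  rw [Pi.zero_apply, Pi.zero_apply, parUpdate, combPlan]
  refine Finset.sum_nonneg fun i _ => add_nonneg (mul_nonneg ?_ ?_) (mul_nonneg ?_ (hS i x y))
  · exact sub_nonneg.2 (hΘ01 _ _ i).2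
  · exact (cellRestr_mem_cellPlans hπ).1 x y
  · exact (hΘ01 _ _ i).1

theorem IsFinPartition.sum_cellRestr (hJs : IsFinPartition Js) (π : X → Y → ℝ) (x : X) (y : Y) :
    ∑ i, cellRestr (Js i) π x y = π x y := by
  obtain ⟨i, hi⟩ := Set.mem_iUnion.1 (hJs.2.1 ▸ Set.mem_univ x)
  calc ∑ j, cellRestr (Js j) π x y = cellRestr (Js i) π x y :=
        Fintype.sum_eq_single i fun j hj =>
          Set.indicator_of_notMem (Set.disjoint_left.1 (hJs.2.2 i j hj.symm) hi) _
    _ = π x y := Set.indicator_of_mem hi _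

theorem parUpdate_eq_self (hJs : IsFinPartition Js) (hfix : ∀ i, S i π = cellRestr (Js i) π) :
    parUpdate Js S Θ π = π := by
  ext x y
  simp only [parUpdate, combPlan, hfix]
  rw [← hJs.sum_cellRestr π x y]
  exact Finset.sum_congr rfl fun i _ => by ring

theorem map_parUpdate_le {β : Type*} [Preorder β] {E : (X → Y → ℝ) → β}
    (hJs : IsFinPartition Js)
    (hdec : (∃ i, S i π ≠ cellRestr (Js i) π) → E (parUpdate Js S Θ π) < E π) :
    E (parUpdate Js S Θ π) ≤ E π := by
  by_cases hfix : ∀ i, S i π = cellRestr (Js i) π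
  · rw [parUpdate_eq_self hJs hfix]
  · exact (hdec (not_forall.1 hfix)).le

theorem continuousOn_combPlan {P : Type*} [TopologicalSpace P] {A : Set P}
    {πJ tπ : P → Fin n → X → Y → ℝ} {θ : P → Fin n → ℝ} (hπJ : ContinuousOn πJ A)
    (htπ : ContinuousOn tπ A) (hθ : ContinuousOn θ A) :
    ContinuousOn (fun p => combPlan (πJ p) (tπ p) (θ p)) A := by
  unfold combPlan
  fun_prop

theorem continuousOn_parUpdate {A : Set (X → Y → ℝ)} (hS : ∀ i, ContinuousOn (S i) A)
    (hΘ : Continuous (Function.uncurry Θ)) : ContinuousOn (parUpdate Js S Θ) A := by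
  have hrestr : ContinuousOn (fun (π : X → Y → ℝ) i => cellRestr (Js i) π) A :=
    (continuous_pi fun i => continuous_cellRestr (Js i)).continuousOn
  have hsolve : ContinuousOn (fun π i => S i π) A := continuousOn_pi.2 hS
  have hweights : ContinuousOn (fun π => Θ (fun i => cellRestr (Js i) π) fun i => S i π) A :=
    hΘ.comp_continuousOn (hrestr.prodMk hsolve)
  exact continuousOn_combPlan hrestr hsolve hweights

/- Plans fixed by all cell solvers are row-wise minimal, hence minimal; at all other plans the
update strictly decreases `F`, so `F` is a Lyapunov function on a compact sublevel set. -/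
theorem tendsto_minimizer_of_frequently_parUpdate {F : (X → Y → ℝ) → ℝ}
    (hFconv : StrictConvexOn ℝ (Set.Ici 0) F) (hFcont : ContinuousOn F (Set.Ici 0))
    (hFrows : ∀ π, 0 ≤ π →
      (∀ x, IsMinOn (fun v => F (Function.update π x v)) (Set.Ici 0) (π x)) →
      IsMinOn F (Set.Ici 0) π)
    (hJs : IsFinPartition Js) (hS : ∀ i, IsCellSolver F (Js i) (S i))
    (hΘ01 : ∀ πJ tπ i, Θ πJ tπ i ∈ Set.Icc (0 : ℝ) 1) (hΘ : Continuous (Function.uncurry Θ))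
    (hdec : ∀ π, 0 ≤ π → (∃ i, S i π ≠ cellRestr (Js i) π) → F (parUpdate Js S Θ π) < F π)
    {u : ℕ → X → Y → ℝ} (hK : IsCompact {π ∈ Set.Ici 0 | F π ≤ F (u 0)})
    (hu : ∀ k, 0 ≤ u k) (hanti : Antitone (F ∘ u))
    (hfreq : ∃ᶠ k in atTop, u (k + 1) = parUpdate Js S Θ (u k)) :
    ∃ p, 0 ≤ p ∧ IsMinOn F (Set.Ici 0) p ∧ Tendsto u atTop (𝓝 p) := by
  set K := {π ∈ Set.Ici (0 : X → Y → ℝ) | F π ≤ F (u 0)}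
  have huK (k : ℕ) : u k ∈ K := ⟨hu k, hanti k.zero_le⟩
  obtain ⟨p, hpK, hpmin⟩ := hK.exists_isMinOn ⟨u 0, huK 0⟩ (hFcont.mono fun π hπ => hπ.1)
  have hp : IsMinOn F (Set.Ici 0) p := fun π hπ =>
    (le_total (F π) (F (u 0))).elim (fun h => hpmin ⟨hπ, h⟩) fun h => (hpmin (huK 0)).trans h
  have huniq {q : X → Y → ℝ} (hq : 0 ≤ q) (hqmin : IsMinOn F (Set.Ici 0) q) : q = p :=
    hFconv.eq_of_isMinOn hqmin hp hq hpK.1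
  have hmove {q : X → Y → ℝ} (hq : 0 ≤ q) (hne : q ≠ p) : ∃ i, S i q ≠ cellRestr (Js i) q := by
    by_contra! hfix
    refine hne (huniq hq (hFrows q hq fun x => ?_))
    obtain ⟨i, hi⟩ := Set.mem_iUnion.1 (hJs.2.1 ▸ Set.mem_univ x)
    exact (hS i).isMinOn_update hq (hfix i) hi
  refine ⟨p, hpK.1, hp, tendsto_minimizer_of_frequently_step (T := parUpdate Js S Θ) hK
    (hFcont.mono fun π hπ => hπ.1)
    (continuousOn_parUpdate (fun i => (hS i).continuousOn_sublevel hFconv hFcont hK) hΘ)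
    (fun q hq => ⟨?_, ?_⟩) hpmin (fun q hq hqmin => huniq hq.1 fun π hπ => ?_)
    (fun q hq hne => hdec q hq.1 (hmove hq.1 hne)) huK hanti hfreq⟩
  · exact parUpdate_nonneg hΘ01 hq.1 fun i => ((hS i).mem hq.1).1
  · exact (map_parUpdate_le hJs (hdec q hq.1)).trans hq.2
  · exact (isMinOn_iff.1 hqmin p hpK).trans (hp hπ)

end ParallelUpdate

section Objective

variable {X Y : Type*} [Fintype X] [Fintype Y] {c : X → Y → ℝ} {ε : ℝ} {φ₁ φ₂ : ℝ → EReal}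
  {μ : X → ℝ} {ν : Y → ℝ}

theorem IsSolveMap.isCellSolver {n : ℕ} {Js : Fin n → Set X}
    {S : Fin n → (X → Y → ℝ) → X → Y → ℝ} (hS : IsSolveMap c ε φ₁ φ₂ μ ν Js S)
    (h₁ : AssumptionA φ₁) (h₂ : AssumptionA φ₂) (hμ : ∀ x, 0 < μ x) (hν : ∀ y, 0 < ν y)
    (i : Fin n) :
    IsCellSolver (energy c ε (fun s => (φ₁ s).toReal) (fun s => (φ₂ s).toReal) μ ν 0) (Js i)
      (S i) where
  mem π hπ := ⟨(hS i π hπ).1, fun x hx => funext ((hS i π hπ).2.1 x hx)⟩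
  isMinOn π hπ := by
    intro q hq
    obtain ⟨hS0, -, hSmin⟩ := hS i π hπ
    have hout : 0 ≤ outMarg (Js i) π := fun y =>
      Finset.sum_nonneg fun x _ => Set.indicator_nonneg (fun x' _ => hπ x' y) x
    have hcell := hSmin (fun j y => q j y) fun j y => hq.1 j y
    rw [EJfun_eq_coe_energy _ ε h₁ h₂ (fun j : Js i => hμ j) hν hout fun j y => hS0 j y,
      EJfun_eq_coe_energy _ ε h₁ h₂ (fun j : Js i => hμ j) hν hout fun j y => hq.1 j y,
      EReal.coe_le_coe_iff] at hcell
    obtain ⟨r, hr⟩ := exists_energy_piecewise_eq c ε (fun s => (φ₁ s).toReal)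
      (fun s => (φ₂ s).toReal) μ ν (Js i) π
    simpa only [Set.mem_ofPred_eq, hr, add_le_add_iff_right] using hcell

theorem Eglobal_eq_coe_energy (c : X → Y → ℝ) (ε : ℝ) (h₁ : AssumptionA φ₁)
    (h₂ : AssumptionA φ₂) (hμ : ∀ x, 0 < μ x) (hν : ∀ y, 0 < ν y) {π : X → Y → ℝ} (hπ : 0 ≤ π) :
    Eglobal c ε φ₁ φ₂ μ ν π
      = (energy c ε (fun s => (φ₁ s).toReal) (fun s => (φ₂ s).toReal) μ ν 0 π : EReal) :=
  EJfun_eq_coe_energy c ε h₁ h₂ hμ hν le_rfl hπ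

theorem IsSolveMap.parUpdate_nonneg_and_Eglobal_le {n : ℕ} {Js : Fin n → Set X}
    {S : Fin n → (X → Y → ℝ) → X → Y → ℝ} (hS : IsSolveMap c ε φ₁ φ₂ μ ν Js S)
    {Θ : (Fin n → X → Y → ℝ) → (Fin n → X → Y → ℝ) → Fin n → ℝ} (hJs : IsFinPartition Js)
    (hΘ01 : ∀ πJ tπ i, Θ πJ tπ i ∈ Set.Icc (0 : ℝ) 1) {π : X → Y → ℝ} (hπ : 0 ≤ π)
    (hdec : Eglobal c ε φ₁ φ₂ μ ν π ≠ ⊤ → (∃ i, S i π ≠ cellRestr (Js i) π) →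
      Eglobal c ε φ₁ φ₂ μ ν (parUpdate Js S Θ π) < Eglobal c ε φ₁ φ₂ μ ν π) :
    0 ≤ parUpdate Js S Θ π ∧
      Eglobal c ε φ₁ φ₂ μ ν (parUpdate Js S Θ π) ≤ Eglobal c ε φ₁ φ₂ μ ν π := by
  refine ⟨parUpdate_nonneg hΘ01 hπ fun i => (hS i π hπ).1, ?_⟩
  by_cases htop : Eglobal c ε φ₁ φ₂ μ ν π = ⊤
  · exact htop ▸ le_top
  · exact map_parUpdate_le hJs (hdec htop)

theorem parallel_domdec_converges_continuous_rule_general [Nonempty X] [Nonempty Y]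
    (hμ : ∀ x, 0 < μ x) (hν : ∀ y, 0 < ν y) (hε : 0 < ε)
    (h₁ : AssumptionA φ₁) (h₂ : AssumptionA φ₂)
    {n : ℕ} {Js : Fin n → Set X} (hJs : IsFinPartition Js)
    {S : Fin n → (X → Y → ℝ) → X → Y → ℝ} (hS : IsSolveMap c ε φ₁ φ₂ μ ν Js S)
    {Θ : (Fin n → X → Y → ℝ) → (Fin n → X → Y → ℝ) → Fin n → ℝ}
    (hΘ01 : ∀ πJ tπ i, Θ πJ tπ i ∈ Set.Icc (0 : ℝ) 1) (hΘ : Continuous (Function.uncurry Θ))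
    (hdec : ∀ π, 0 ≤ π → Eglobal c ε φ₁ φ₂ μ ν π ≠ ⊤ → (∃ i, S i π ≠ cellRestr (Js i) π) →
      Eglobal c ε φ₁ φ₂ μ ν (parUpdate Js S Θ π) < Eglobal c ε φ₁ φ₂ μ ν π)
    {iter : ℕ → X → Y → ℝ} (hiter0 : 0 ≤ iter 0)
    (hstep : ∀ k, 0 ≤ iter k → 0 ≤ iter (k + 1) ∧
      Eglobal c ε φ₁ φ₂ μ ν (iter (k + 1)) ≤ Eglobal c ε φ₁ φ₂ μ ν (iter k))
    (hfreq : ∃ᶠ k in atTop, iter (k + 1) = parUpdate Js S Θ (iter k)) :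
    ∃ πopt : X → Y → ℝ, (∀ x y, 0 ≤ πopt x y) ∧
      (∀ π' : X → Y → ℝ, (∀ x y, 0 ≤ π' x y) →
          Eglobal c ε φ₁ φ₂ μ ν πopt ≤ Eglobal c ε φ₁ φ₂ μ ν π') ∧
      (∀ π' : X → Y → ℝ, (∀ x y, 0 ≤ π' x y) →
          (∀ π'' : X → Y → ℝ, (∀ x y, 0 ≤ π'' x y) →
            Eglobal c ε φ₁ φ₂ μ ν π' ≤ Eglobal c ε φ₁ φ₂ μ ν π'') →
          π' = πopt) ∧
      ∀ x y, Tendsto (fun k => iter k x y) atTop (𝓝 (πopt x y)) := by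
  set F := energy c ε (fun s => (φ₁ s).toReal) (fun s => (φ₂ s).toReal) μ ν 0
  have hE {π : X → Y → ℝ} (hπ : 0 ≤ π) : Eglobal c ε φ₁ φ₂ μ ν π = (F π : EReal) :=
    Eglobal_eq_coe_energy c ε h₁ h₂ hμ hν hπ
  have hFconv := strictConvexOn_energy c hε h₁.convexOn_toReal h₂.convexOn_toReal hμ hν le_rfl
  have hFcont := continuousOn_energy c ε h₁.continuousOn_toReal h₂.continuousOn_toReal
    (fun x => (hμ x).le) (fun y => (hν y).le) le_rfl
  have hiter (k : ℕ) : 0 ≤ iter k := k.rec hiter0 fun k hk => (hstep k hk).1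
  have hanti : Antitone (F ∘ iter) := antitone_nat_of_succ_le fun k => by
    rw [← EReal.coe_le_coe_iff, Function.comp_apply, Function.comp_apply, ← hE (hiter _),
      ← hE (hiter _)]
    exact (hstep k (hiter k)).2
  have hdecF (π : X → Y → ℝ) (hπ : 0 ≤ π) (hmove : ∃ i, S i π ≠ cellRestr (Js i) π) :
      F (parUpdate Js S Θ π) < F π := by
    have hlt := hdec π hπ (hE hπ ▸ EReal.coe_ne_top _) hmove
    rwa [hE hπ, hE (parUpdate_nonneg hΘ01 hπ fun i => (hS i π hπ).1),
      EReal.coe_lt_coe_iff] at hlt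
  obtain ⟨p, hp, hpmin, htendsto⟩ := tendsto_minimizer_of_frequently_parUpdate hFconv hFcont
    (fun π hπ => isMinOn_energy_of_isMinOn_update c hε h₁.convexOn_toReal h₂.convexOn_toReal
      (fun _ => h₁.differentiableAt_toReal) (fun _ => h₂.differentiableAt_toReal) hμ hν le_rfl hπ)
    hJs (hS.isCellSolver h₁ h₂ hμ hν) hΘ01 hΘ hdecF
    (isCompact_energy_sublevel c hε (fun s _ => h₁.toReal_nonneg s)
      (fun s _ => h₂.toReal_nonneg s) h₁.continuousOn_toReal
      h₂.continuousOn_toReal hμ hν le_rfl _) hiter hanti hfreq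
  refine ⟨p, hp, fun π hπ => ?_, fun π hπ hmin => ?_, fun x y => ?_⟩
  · rw [hE hp, hE hπ, EReal.coe_le_coe_iff]
    exact hpmin hπ
  · refine hFconv.eq_of_isMinOn (isMinOn_iff.2 fun π' hπ' => ?_) hpmin hπ hp
    rw [← EReal.coe_le_coe_iff, ← hE hπ, ← hE hπ']
    exact hmin π' hπ'
  · exact tendsto_pi_nhds.1 (tendsto_pi_nhds.1 htendsto x) y

end Objective

/-- parallel domain decomposition with a continuous weight rule
that strictly decreases the score on every non-fixed point converges pointwise
to the unique global minimizer of `E`. -/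
theorem parallel_domdec_converges_continuous_rule
    {X Y : Type*} [Fintype X] [Fintype Y] [Nonempty X] [Nonempty Y]
    (μ : X → ℝ) (ν : Y → ℝ) (hμ : ∀ x, 0 < μ x) (hν : ∀ y, 0 < ν y)
    (c : X → Y → ℝ) (ε : ℝ) (hε : 0 < ε)
    (φ₁ φ₂ : ℝ → EReal) (h₁ : AssumptionA φ₁) (h₂ : AssumptionA φ₂)
    {nA nB : ℕ} (JA : Fin nA → Set X) (JB : Fin nB → Set X)
    (hJA : IsFinPartition JA) (hJB : IsFinPartition JB)
    (SA : Fin nA → (X → Y → ℝ) → (X → Y → ℝ))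
    (SB : Fin nB → (X → Y → ℝ) → (X → Y → ℝ))
    (hSA : IsSolveMap c ε φ₁ φ₂ μ ν JA SA)
    (hSB : IsSolveMap c ε φ₁ φ₂ μ ν JB SB)
    (ΘA : (Fin nA → X → Y → ℝ) → (Fin nA → X → Y → ℝ) → Fin nA → ℝ)
    (ΘB : (Fin nB → X → Y → ℝ) → (Fin nB → X → Y → ℝ) → Fin nB → ℝ)
    -- the weight rules take values in [0,1]
    (hΘA01 : ∀ πJ tπ i, ΘA πJ tπ i ∈ Set.Icc (0 : ℝ) 1)
    (hΘB01 : ∀ πJ tπ i, ΘB πJ tπ i ∈ Set.Icc (0 : ℝ) 1)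
    -- (i) continuity of the weight rules
    (hΘAcont : Continuous fun p : (Fin nA → X → Y → ℝ) × (Fin nA → X → Y → ℝ) =>
      ΘA p.1 p.2)
    (hΘBcont : Continuous fun p : (Fin nB → X → Y → ℝ) × (Fin nB → X → Y → ℝ) =>
      ΘB p.1 p.2)
    -- (ii) strict decrement unless all cell plans are already optimal
    (hΘAdec : ∀ π : X → Y → ℝ, (∀ x y, 0 ≤ π x y) →
      Eglobal c ε φ₁ φ₂ μ ν π ≠ ⊤ →
      (∃ i, SA i π ≠ cellRestr (JA i) π) →
      Eglobal c ε φ₁ φ₂ μ ν (parUpdate JA SA ΘA π) < Eglobal c ε φ₁ φ₂ μ ν π)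
    (hΘBdec : ∀ π : X → Y → ℝ, (∀ x y, 0 ≤ π x y) →
      Eglobal c ε φ₁ φ₂ μ ν π ≠ ⊤ →
      (∃ i, SB i π ≠ cellRestr (JB i) π) →
      Eglobal c ε φ₁ φ₂ μ ν (parUpdate JB SB ΘB π) < Eglobal c ε φ₁ φ₂ μ ν π)
    (π0 : X → Y → ℝ) (hπ0 : ∀ x y, 0 ≤ π0 x y)
    (hfin : Eglobal c ε φ₁ φ₂ μ ν π0 ≠ ⊤)
    (iter : ℕ → X → Y → ℝ) (hiter0 : iter 0 = π0)
    (hiterS : ∀ k : ℕ, iter (k + 1) =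
      if (k + 1) % 2 = 1 then parUpdate JA SA ΘA (iter k)
      else parUpdate JB SB ΘB (iter k)) :
    ∃ πopt : X → Y → ℝ, (∀ x y, 0 ≤ πopt x y) ∧
      (∀ π' : X → Y → ℝ, (∀ x y, 0 ≤ π' x y) →
          Eglobal c ε φ₁ φ₂ μ ν πopt ≤ Eglobal c ε φ₁ φ₂ μ ν π') ∧
      (∀ π' : X → Y → ℝ, (∀ x y, 0 ≤ π' x y) →
          (∀ π'' : X → Y → ℝ, (∀ x y, 0 ≤ π'' x y) →
            Eglobal c ε φ₁ φ₂ μ ν π' ≤ Eglobal c ε φ₁ φ₂ μ ν π'') →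
          π' = πopt) ∧
      ∀ x y, Filter.Tendsto (fun k => iter k x y) Filter.atTop (nhds (πopt x y)) := by
  have hevenStep (k : ℕ) : iter (2 * k + 1) = parUpdate JA SA ΘA (iter (2 * k)) := by
    rw [hiterS, if_pos (Nat.odd_iff.1 ⟨k, rfl⟩)]
  refine parallel_domdec_converges_continuous_rule_general hμ hν hε h₁ h₂ hJA hSA hΘA01 hΘAcont
    hΘAdec (hiter0 ▸ hπ0) (fun k hk => ?_)
    (frequently_atTop.2 fun k => ⟨2 * k, Nat.le_mul_of_pos_left k two_pos, hevenStep k⟩)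
  rw [hiterS]
  split_ifs
  · exact hSA.parUpdate_nonneg_and_Eglobal_le hJA hΘA01 hk (hΘAdec _ hk)
  · exact hSB.parUpdate_nonneg_and_Eglobal_le hJB hΘB01 hk (hΘBdec _ hk)

end
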